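/- arXiv:1905.01401 — 8 statements merged into one kernel-verified Lean document; each statement's English description precedes it below -/
import Mathlib

section
/- Let A be a candidate such that for every other candidate B ≠ A the bipartite graph G(A,B) has a perfect matching (i.e., A is in the matching uncovered set). Then for every metric d on C ∪ V consistent with the voting profile and every candidate B, Σ_{v ∈ V} d(A,v) ≤ 3 · Σ_{v ∈ V} d(B,v). In other words, selecting any candidate from the matching uncovered set guarantees distortion at most 3. -/
/-- `d` is a metric: nonnegative, symmetric and satisfying the triangle inequality. -/
def IsMetric {α : Type*} (d : α → α → ℝ) : Prop :=
  (∀ x y, 0 ≤ d x y) ∧ (∀ x y, d x y = d y x) ∧ (∀ x y z, d x z ≤ d x y + d y z)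

/-- `d` on the entities `C ⊕ V` is consistent with the voting profile `pref`
(where `pref v X Y` means voter `v` strictly prefers candidate `X` to `Y`):
a more-preferred candidate is at weakly smaller distance. -/
def Consistent {C V : Type*} (pref : V → C → C → Prop) (d : C ⊕ V → C ⊕ V → ℝ) : Prop :=
  ∀ (v : V) (X Y : C), pref v X Y → d (Sum.inl X) (Sum.inr v) ≤ d (Sum.inl Y) (Sum.inr v)

/-- Edge of the bipartite graph `G(A,B)` between left copy `v` and right copy `v'`
of the voters: `P_v(B) ∩ Q_{v'}(A) ≠ ∅`, i.e. some candidate `Z` is liked at least as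
much as `B` by `v` and at most as much as `A` by `v'`. -/
def GEdge {C V : Type*} (pref : V → C → C → Prop) (A B : C) (v v' : V) : Prop :=
  ∃ Z : C, (Z = B ∨ pref v Z B) ∧ (Z = A ∨ pref v' A Z)

/-- The bipartite graph `G(A,B)` (both sides a copy of the voter set) has a perfect
matching. -/
def HasPM {C V : Type*} (pref : V → C → C → Prop) (A B : C) : Prop :=
  ∃ M : V ≃ V, ∀ v : V, GEdge pref A B v (M v)

/-- The weight `w(X,Y)` of the weighted tournament graph: the fraction of voters
preferring `X` to `Y`. -/
noncomputable def wgt {C V : Type*} [Fintype V] (pref : V → C → C → Prop) (X Y : C) : ℝ :=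
  (Nat.card {v : V // pref v X Y} : ℝ) / (Fintype.card V : ℝ)

/-!
An edge `(v, v')` of `G(A, B)`, witnessed by `Z`, gives
`d(A, v') ≤ d(Z, v') ≤ d(Z, v) + d(v, v') ≤ d(B, v) + (d(B, v) + d(B, v'))`.
A perfect matching visits every voter exactly once on each side, so summing over its edges gives
`∑ d(A, v) ≤ 2 ∑ d(B, v) + ∑ d(B, v)`. The case `B = A` needs no separate estimate, since the
identity is a perfect matching of `G(A, A)`.
-/

theorem IsMetric.triangle_left {α : Type*} {d : α → α → ℝ} (hd : IsMetric d) (x y z : α) :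
    d x y ≤ d z x + d z y := by
  obtain ⟨-, symmetric, triangle⟩ := hd
  simpa only [symmetric x z] using triangle x z y

section Profile

variable {C V : Type*} {pref : V → C → C → Prop} {d : C ⊕ V → C ⊕ V → ℝ} {A B : C}

theorem Consistent.le_of_eq_or_pref (hcons : Consistent pref d) {v : V} {X Y : C}
    (h : X = Y ∨ pref v X Y) : d (Sum.inl X) (Sum.inr v) ≤ d (Sum.inl Y) (Sum.inr v) := by
  obtain rfl | hXY := h
  · exact le_rfl
  · exact hcons v X Y hXY

theorem GEdge.dist_le_two_mul_add {v v' : V} (hedge : GEdge pref A B v v') (hd : IsMetric d)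
    (hcons : Consistent pref d) :
    d (Sum.inl A) (Sum.inr v') ≤ 2 * d (Sum.inl B) (Sum.inr v) + d (Sum.inl B) (Sum.inr v') := by
  obtain ⟨Z, hZB, hAZ⟩ := hedge
  calc d (Sum.inl A) (Sum.inr v')
      ≤ d (Sum.inl Z) (Sum.inr v') := hcons.le_of_eq_or_pref (hAZ.imp_left Eq.symm)
    _ ≤ d (Sum.inl Z) (Sum.inr v) + d (Sum.inr v) (Sum.inr v') := hd.2.2 _ _ _
    _ ≤ d (Sum.inl B) (Sum.inr v) +
          (d (Sum.inl B) (Sum.inr v) + d (Sum.inl B) (Sum.inr v')) :=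
        add_le_add (hcons.le_of_eq_or_pref hZB) (hd.triangle_left _ _ _)
    _ = 2 * d (Sum.inl B) (Sum.inr v) + d (Sum.inl B) (Sum.inr v') := by ring

theorem hasPM_self (pref : V → C → C → Prop) (A : C) : HasPM pref A A :=
  ⟨Equiv.refl V, fun _ => ⟨A, Or.inl rfl, Or.inl rfl⟩⟩

theorem stmt_0_general [Fintype V] (hPM : HasPM pref A B) (hd : IsMetric d)
    (hcons : Consistent pref d) :
    ∑ v : V, d (Sum.inl A) (Sum.inr v) ≤ 3 * ∑ v : V, d (Sum.inl B) (Sum.inr v) := by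
  obtain ⟨M, hM⟩ := hPM
  calc ∑ v, d (Sum.inl A) (Sum.inr v)
      = ∑ v, d (Sum.inl A) (Sum.inr (M v)) :=
        (M.sum_comp fun v => d (Sum.inl A) (Sum.inr v)).symm
    _ ≤ ∑ v, (2 * d (Sum.inl B) (Sum.inr v) + d (Sum.inl B) (Sum.inr (M v))) :=
        Finset.sum_le_sum fun v _ => (hM v).dist_le_two_mul_add hd hcons
    _ = 2 * ∑ v, d (Sum.inl B) (Sum.inr v) + ∑ v, d (Sum.inl B) (Sum.inr v) := by
        rw [Finset.sum_add_distrib, ← Finset.mul_sum,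
          M.sum_comp fun v => d (Sum.inl B) (Sum.inr v)]
    _ = 3 * ∑ v, d (Sum.inl B) (Sum.inr v) := by ring

end Profile

/-- Theorem 4.4: selecting any candidate `A` from the matching uncovered set (i.e. such
that `G(A,B)` has a perfect matching for every other candidate `B`) guarantees
distortion at most `3`: for every consistent metric `d` and every candidate `B`,
`∑_v d(A,v) ≤ 3 ∑_v d(B,v)`. -/
theorem stmt_0 {C V : Type*} [Fintype C] [Fintype V]
    (pref : V → C → C → Prop) (hpref : ∀ v, IsStrictTotalOrder C (pref v))
    (A : C) (hA : ∀ B : C, B ≠ A → HasPM pref A B)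
    (d : C ⊕ V → C ⊕ V → ℝ) (hd : IsMetric d) (hcons : Consistent pref d)
    (B : C) :
    ∑ v : V, d (Sum.inl A) (Sum.inr v) ≤ 3 * ∑ v : V, d (Sum.inl B) (Sum.inr v) := by
  obtain rfl | hBA := eq_or_ne B A
  · exact stmt_0_general (hasPM_self pref B) hd hcons
  · exact stmt_0_general (hA B hBA) hd hcons
end

section
/- Suppose at least half of the voters prefer candidate A to candidate B, i.e., |{v ∈ V : A ≻_v B}| ≥ m/2 where m = |V|. Then the bipartite graph G(A,B) has a perfect matching. -/
/-!
A voter who prefers `A` to `B` is joined to every vertex of the other side of `G(A,B)`, through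
the candidate `A` on the left and through `B` on the right. So a permutation of the voters is a
perfect matching as soon as it sends every voter who does not prefer `A` to one who does. When the
latter are at least as numerous, inject the former into them and exchange each voter with their
image.
-/

open Cardinal

section SwapCompl

variable {α : Type*} {p : α → Prop} [DecidablePred p]

/-- The map exchanging each `x` with `¬ p x` and its image `f x`, and fixing every other point.
It is the involution behind the perfect matching; `Function.extend f (↑) (↑)` encodes the inverse
of `f` on its range and the inclusion elsewhere. -/
noncomputable def swapCompl (f : {x // ¬ p x} ↪ {x // p x}) (x : α) : α :=
  if hx : p x then Function.extend f (↑) (↑) (⟨x, hx⟩ : {x // p x}) else f ⟨x, hx⟩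

variable (f : {x // ¬ p x} ↪ {x // p x})

theorem swapCompl_of_not {x : α} (hx : ¬ p x) : swapCompl f x = f ⟨x, hx⟩ :=
  dif_neg hx

theorem swapCompl_apply_embedding (x : {x // ¬ p x}) : swapCompl f (f x) = x := by
  rw [swapCompl, dif_pos (f x).2]
  exact f.injective.extend_apply _ _ x

theorem swapCompl_of_notMem_range {y : {x // p x}} (hy : y ∉ Set.range f) :
    swapCompl f y = y := by
  rw [swapCompl, dif_pos y.2]
  exact Function.extend_apply' _ _ y hy

theorem swapCompl_involutive : Function.Involutive (swapCompl f) := by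
  intro x
  by_cases hx : p x
  · by_cases hrange : (⟨x, hx⟩ : {x // p x}) ∈ Set.range f
    · obtain ⟨z, hz⟩ := hrange
      obtain rfl : (f z : α) = x := congrArg Subtype.val hz
      rw [swapCompl_apply_embedding, swapCompl_of_not f z.2]
    · have hfix : swapCompl f x = x := swapCompl_of_notMem_range f hrange
      rw [hfix, hfix]
  · rw [swapCompl_of_not f hx, swapCompl_apply_embedding]

end SwapCompl

theorem exists_perm_forall_or_of_mk_not_le {α : Type*} {p : α → Prop}
    (h : #{x // ¬ p x} ≤ #{x // p x}) : ∃ σ : Equiv.Perm α, ∀ x, p x ∨ p (σ x) := by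
  classical
  obtain ⟨f⟩ := h
  refine ⟨(swapCompl_involutive f).toPerm, fun x => or_iff_not_imp_left.mpr fun hx => ?_⟩
  rw [Function.Involutive.coe_toPerm, swapCompl_of_not f hx]
  exact (f ⟨x, hx⟩).2

theorem mk_not_le_mk_of_card_le_two_mul {α : Type*} [Fintype α] {p : α → Prop}
    (h : Fintype.card α ≤ 2 * Nat.card {x // p x}) : #{x // ¬ p x} ≤ #{x // p x} := by
  classical
  rw [Nat.card_eq_fintype_card] at h
  rw [mk_fintype, mk_fintype, Nat.cast_le, Fintype.card_subtype_compl]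
  lia

section GEdge

variable {C V : Type*} {pref : V → C → C → Prop} {A B : C}

theorem GEdge.of_pref_left {v : V} (hv : pref v A B) (v' : V) : GEdge pref A B v v' :=
  ⟨A, Or.inr hv, Or.inl rfl⟩

theorem GEdge.of_pref_right (v : V) {v' : V} (hv' : pref v' A B) : GEdge pref A B v v' :=
  ⟨B, Or.inl rfl, Or.inr hv'⟩

end GEdge

theorem stmt_7_general {C V : Type*} (pref : V → C → C → Prop) (A B : C)
    (hhalf : #{v // ¬ pref v A B} ≤ #{v // pref v A B}) : HasPM pref A B := by
  obtain ⟨M, hM⟩ := exists_perm_forall_or_of_mk_not_le hhalf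
  exact ⟨M, fun v => (hM v).elim (GEdge.of_pref_left · (M v)) (GEdge.of_pref_right v)⟩

/-- If at least half of the voters prefer candidate `A` to candidate `B ≠ A`, then the
bipartite graph `G(A,B)` has a perfect matching. -/
theorem stmt_7 {C V : Type*} [Fintype C] [Fintype V]
    (pref : V → C → C → Prop) (hpref : ∀ v, IsStrictTotalOrder C (pref v))
    (A B : C) (hAB : A ≠ B)
    (hhalf : Fintype.card V ≤ 2 * Nat.card {v : V // pref v A B}) :
    HasPM pref A B :=
  stmt_7_general pref A B (mk_not_le_mk_of_card_le_two_mul hhalf)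
end

section
/- Let the candidate set be C = {X_1, ..., X_n} (any n ≥ 2) and let V be a set of at most 3 voters with an arbitrary voting profile. Then at least one of the bipartite graphs G(X_1,X_2), G(X_2,X_3), ..., G(X_{n-1},X_n), G(X_n,X_1) has a perfect matching. -/
/-!
Let every voter start with one token on their favorite candidate, and let the voters in turn remove
a token from the candidate they like least among those still holding one. If `A` is the candidate
holding the last token, then each voter weakly prefers `A` to the candidate whose token they
removed. Tokens correspond bijectively to voters, so matching the owner of a token with its remover
is a perfect matching of `G(A, B)` for every `B`, witnessed by the favorite candidate of the owner.
-/

open Relation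

theorem total_reflGen {α : Type*} (r : α → α → Prop) [Std.Trichotomous r] :
    Std.Total (ReflGen r) where
  total a b := by
    rcases trichotomous_of r a b with hab | rfl | hba
    · exact .inl (.single hab)
    · exact .inl .refl
    · exact .inr (.single hba)

/-- When `r i a b` says that voter `i` likes `a` at least as much as `b`, the token removed by voter
`i` is `σ i`. -/
theorem exists_perm_forall_le_rel {α : Type*} {n : ℕ} (r : Fin n → α → α → Prop)
    [∀ i, Std.Total (r i)] [∀ i, IsTrans α (r i)] (f : Fin n → α) :
    ∃ σ : Equiv.Perm (Fin n), ∀ i j, i ≤ j → r i (f (σ j)) (f (σ i)) := by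
  induction n with
  | zero => exact ⟨1, fun i => i.elim0⟩
  | succ n ih =>
    obtain ⟨worst, hworst⟩ := (Std.Total.directed (r := r 0) f).finite_le id
    obtain ⟨τ, hτ⟩ := ih (fun i => r i.succ) (f ∘ worst.succAbove)
    let σ : Equiv.Perm (Fin (n + 1)) :=
      (finSuccEquiv n).trans (τ.optionCongr.trans (finSuccEquiv' worst).symm)
    have σ_zero : σ 0 = worst := by simp [σ]
    have σ_succ (i : Fin n) : σ i.succ = worst.succAbove (τ i) := by simp [σ]
    refine ⟨σ, fun i j hij => ?_⟩
    cases i using Fin.cases with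
    | zero => exact σ_zero ▸ hworst (σ j)
    | succ i =>
      cases j using Fin.cases with
      | zero => exact absurd hij (Fin.succ_pos i).not_ge
      | succ j => simpa only [σ_succ, Function.comp_apply] using hτ i j (Fin.succ_le_succ_iff.1 hij)

theorem exists_perm_forall_rel {ι α : Type*} [Finite ι] [Nonempty ι] (r : ι → α → α → Prop)
    [∀ i, Std.Total (r i)] [∀ i, IsTrans α (r i)] (f : ι → α) :
    ∃ (a : ι) (σ : Equiv.Perm ι), ∀ i, r i (f a) (f (σ i)) := by
  obtain ⟨n, ⟨e⟩⟩ := Finite.exists_equiv_fin ι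
  have : Nonempty (Fin n) := e.nonempty_congr.1 ‹_›
  obtain ⟨last, hlast⟩ := Finite.exists_le (id : Fin n → Fin n)
  obtain ⟨σ, hσ⟩ := exists_perm_forall_le_rel (fun k => r (e.symm k)) (f ∘ e.symm)
  refine ⟨e.symm (σ last), e.trans (σ.trans e.symm), fun i => ?_⟩
  simpa using hσ (e i) last (hlast (e i))

theorem exists_forall_reflGen {α : Type*} [Finite α] [Nonempty α] (r : α → α → Prop)
    [IsTrans α r] [Std.Trichotomous r] : ∃ a, ∀ b, ReflGen r a b :=
  have := total_reflGen r
  (Std.Total.directed (r := Function.swap (ReflGen r)) id).finite_le id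

theorem gEdge_iff_exists_reflGen {C V : Type*} {pref : V → C → C → Prop} {A B : C} {v v' : V} :
    GEdge pref A B v v' ↔ ∃ Z, ReflGen (pref v) Z B ∧ ReflGen (pref v') A Z := by
  simp only [GEdge, reflGen_iff, eq_comm (a := B)]

theorem hasPM_of_forall_reflGen {C V : Type*} {pref : V → C → C → Prop} {A B : C} {fav : V → C}
    (hfav : ∀ v, ReflGen (pref v) (fav v) B) (σ : Equiv.Perm V)
    (hσ : ∀ v, ReflGen (pref v) A (fav (σ v))) : HasPM pref A B :=
  ⟨σ.symm, fun v => gEdge_iff_exists_reflGen.2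
    ⟨fav v, hfav v, by simpa only [σ.apply_symm_apply] using hσ (σ.symm v)⟩⟩

theorem stmt_9_general {C V : Type*} [Finite V] [Nonempty C] (pref : V → C → C → Prop)
    (hpref : ∀ v, IsStrictTotalOrder C (pref v)) (hfav : ∀ v, ∃ T, ∀ B, ReflGen (pref v) T B) :
    ∃ A, ∀ B, HasPM pref A B := by
  choose fav hfav using hfav
  have := fun v => total_reflGen (pref v)
  cases isEmpty_or_nonempty V with
  | inl _ => exact ⟨Classical.arbitrary C, fun _ => ⟨1, isEmptyElim⟩⟩
  | inr _ =>
    obtain ⟨a, σ, hσ⟩ := exists_perm_forall_rel (fun v => ReflGen (pref v)) fav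
    exact ⟨fav a, fun B => hasPM_of_forall_reflGen (hfav · B) σ hσ⟩

/-- Theorem 4.8 (Conjecture 4.6 for at most 3 voters): if the candidate set is
`C = {X_1, …, X_n}` with `n ≥ 2` and there are at most `3` voters, then for any voting
profile at least one of the bipartite graphs
`G(X_1,X_2), …, G(X_{n-1},X_n), G(X_n,X_1)` has a perfect matching.
(`finRotate n` sends index `i` to `i + 1` cyclically.) -/
theorem stmt_9 {C V : Type*} [Fintype V] (hV : Fintype.card V ≤ 3)
    {n : ℕ} (hn : 2 ≤ n)
    (X : Fin n → C) (hX : Function.Bijective X)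
    (pref : V → C → C → Prop) (hpref : ∀ v, IsStrictTotalOrder C (pref v)) :
    ∃ i : Fin n, HasPM pref (X i) (X (finRotate n i)) := by
  have : Finite C := .of_surjective X hX.surjective
  have : Nonempty C := ⟨X ⟨0, by lia⟩⟩
  obtain ⟨A, hA⟩ := stmt_9_general pref hpref fun v => exists_forall_reflGen (pref v)
  obtain ⟨i, rfl⟩ := hX.surjective A
  exact ⟨i, hA _⟩
end

section
/- Let A ≠ B be candidates. If the bipartite graph G(A,B) has no perfect matching, then the set (w(A,B), w(B,A)) \ ⋃_{C ∈ C \ {A,B}} [w(C,A), w(C,B)] is nonempty, where (a,b) denotes the open interval and [a,b] the closed interval of reals. -/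
/-!
By Hall's theorem, if `G(A,B)` has no perfect matching then there are voter sets `S` (left) and `T`
(right) with `|S| + |T| > m` and no edge between them. For a candidate `Z`, the absence of edges
forces one of two alternatives: no voter of `S` prefers `Z` to `B`, so that `w(Z,B) ≤ 1 - |S|/m`, or
every voter of `T` prefers `Z` to `A`, so that `w(Z,A) ≥ |T|/m`. Any number strictly between
`1 - |S|/m` and `|T|/m` therefore avoids every interval `[w(Z,A), w(Z,B)]`; taking `Z = A` and
`Z = B`, where only the first and only the second alternative is possible, places it in
`(w(A,B), w(B,A))`.
-/

open Finset

theorem exists_card_lt_card_add_card_of_not_exists_injective {α β : Type*} [Fintype β]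
    {r : α → β → Prop} (h : ¬ ∃ f : α → β, f.Injective ∧ ∀ a, r a (f a)) :
    ∃ (S : Finset α) (T : Finset β), Fintype.card β < #S + #T ∧ ∀ a ∈ S, ∀ b ∈ T, ¬ r a b := by
  classical
  rw [← Fintype.all_card_le_filter_rel_iff_exists_injective] at h
  push Not at h
  obtain ⟨S, hS⟩ := h
  set N : Finset β := {b | ∃ a ∈ S, r a b}
  refine ⟨S, Nᶜ, ?_, fun a ha b hb hr ↦ ?_⟩
  · have := card_add_card_compl N
    omega
  · exact mem_compl.1 hb ((mem_filter_univ b).2 ⟨a, ha, hr⟩)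

section Profile

variable {C V : Type*} {pref : V → C → C → Prop}

section Weight

variable [Fintype V] {X Y : C} {S : Finset V}

theorem wgt_le_card_div_card (h : ∀ v, pref v X Y → v ∈ S) :
    wgt pref X Y ≤ (#S : ℝ) / Fintype.card V := by
  have card_le : Nat.card {v // pref v X Y} ≤ #S :=
    (Nat.card_mono S.finite_toSet h).trans_eq (Nat.card_eq_finsetCard S)
  unfold wgt
  gcongr

theorem card_div_card_le_wgt (h : ∀ v ∈ S, pref v X Y) :
    (#S : ℝ) / Fintype.card V ≤ wgt pref X Y := by
  have card_le : #S ≤ Nat.card {v // pref v X Y} :=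
    (Nat.card_eq_finsetCard S).ge.trans (Nat.card_mono (Set.toFinite {v | pref v X Y}) h)
  unfold wgt
  gcongr

end Weight

theorem hasPM_of_injective [Finite V] {A B : C} {f : V → V} (f_inj : f.Injective)
    (hf : ∀ v, GEdge pref A B v (f v)) : HasPM pref A B :=
  ⟨Equiv.ofBijective f (Finite.injective_iff_bijective.1 f_inj), hf⟩

theorem forall_left_or_forall_right_of_not_gEdge {A B : C} {S T : Finset V}
    (h : ∀ v ∈ S, ∀ v' ∈ T, ¬ GEdge pref A B v v') (Z : C) :
    (∀ v ∈ S, Z ≠ B ∧ ¬ pref v Z B) ∨ (∀ v' ∈ T, Z ≠ A ∧ ¬ pref v' A Z) := by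
  by_contra! ⟨⟨v, hv, hZB⟩, ⟨v', hv', hZA⟩⟩
  exact h v hv v' hv' ⟨Z, or_iff_not_imp_left.2 hZB, or_iff_not_imp_left.2 hZA⟩

theorem stmt_10_general [Fintype V] (hpref : ∀ v, Std.Trichotomous (pref v)) {A B : C}
    (hnoPM : ¬ HasPM pref A B) :
    (Set.Ioo (wgt pref A B) (wgt pref B A) \
      ⋃ C' ∈ ({A, B}ᶜ : Set C), Set.Icc (wgt pref C' A) (wgt pref C' B)).Nonempty := by
  classical
  obtain ⟨S, T, card_lt, no_edge⟩ := exists_card_lt_card_add_card_of_not_exists_injective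
    fun ⟨_, f_inj, hf⟩ ↦ hnoPM (hasPM_of_injective f_inj hf)
  have S_compl := card_add_card_compl S
  have T_le := card_le_univ T
  obtain ⟨s, hs⟩ : S.Nonempty := card_pos.1 (by omega)
  obtain ⟨t, ht⟩ : T.Nonempty := card_pos.1 (by omega)
  have V_pos : (0 : ℝ) < Fintype.card V := mod_cast Fintype.card_pos_iff.2 ⟨t⟩
  obtain ⟨τ, S_lt, lt_T⟩ : ∃ τ : ℝ, #Sᶜ / Fintype.card V < τ ∧ τ < #T / Fintype.card V :=
    exists_between (div_lt_div_of_pos_right (mod_cast (by omega)) V_pos)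
  have lt_of_S {Z : C} (h : ∀ v ∈ S, Z ≠ B ∧ ¬ pref v Z B) : wgt pref Z B < τ :=
    (wgt_le_card_div_card fun v hZB ↦ mem_compl.2 fun hv ↦ (h v hv).2 hZB).trans_lt S_lt
  have lt_of_T {Z : C} (h : ∀ v ∈ T, Z ≠ A ∧ ¬ pref v A Z) : τ < wgt pref Z A :=
    lt_T.trans_le <| card_div_card_le_wgt fun v hv ↦ by
      by_contra hZA
      exact (h v hv).1 ((hpref v).trichotomous Z A hZA (h v hv).2)
  have alternatives := forall_left_or_forall_right_of_not_gEdge no_edge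
  refine ⟨τ, ⟨?_, ?_⟩, ?_⟩
  · exact lt_of_S ((alternatives A).resolve_right fun h ↦ (h t ht).1 rfl)
  · exact lt_of_T ((alternatives B).resolve_left fun h ↦ (h s hs).1 rfl)
  · simp only [Set.mem_iUnion, not_exists]
    rintro Z - ⟨hZA, hZB⟩
    exact (alternatives Z).elim (fun h ↦ (lt_of_S h).not_ge hZB) fun h ↦ (lt_of_T h).not_ge hZA

end Profile

/-- Lemma 4.10: if the bipartite graph `G(A,B)` has no perfect matching, then the set
`(w(A,B), w(B,A)) \ ⋃_{C' ≠ A,B} [w(C',A), w(C',B)]` is nonempty. -/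
theorem stmt_10 {C V : Type*} [Fintype C] [Fintype V] [Nonempty V]
    (pref : V → C → C → Prop) (hpref : ∀ v, IsStrictTotalOrder C (pref v))
    (A B : C) (hAB : A ≠ B)
    (hnoPM : ¬ HasPM pref A B) :
    (Set.Ioo (wgt pref A B) (wgt pref B A) \
      ⋃ C' ∈ ({A, B}ᶜ : Set C), Set.Icc (wgt pref C' A) (wgt pref C' B)).Nonempty := by
  exact stmt_10_general (fun v ↦ (hpref v).toTrichotomous) hnoPM
end

section
/- Let C be a finite set of n candidates and let w : C × C → [0,1] satisfy w(X,Y) + w(Y,X) = 1 for all distinct X, Y. Suppose w is cyclically symmetric: there is a permutation τ of C that is a single n-cycle with w(τ(X),τ(Y)) = w(X,Y) for all distinct X, Y. Then for all distinct candidates A, B, the open interval (w(A,B), w(B,A)) is contained in ⋃_{C' ∈ C \ {A,B}} [w(C',A), w(C',B)]. -/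
/-!
Some power `f` of the cyclic symmetry sends `B` to `A`. Let `p` be the length of the `f`-orbit of
`B`. Invariance gives `w (f X) A = w X B` whenever `X ≠ B`, so along the orbit the intervals
`(w X A, w X B]` with `X = f² B, …, f^(p-1) B` are consecutive: the right end of each is the left
end of the next. The first one starts at `w (f A) A = w A B`, and the last one ends at
`w (f^p B) A = w B A`.
-/

section

open Function Set

variable {C α : Type*} {f : C → C} {w : C → C → α}

theorem iterate_mem_compl_pair {x : C} {i : ℕ} (hi : 1 < i) (hip : i < minimalPeriod f x) :
    f^[i] x ∈ ({f x, x}ᶜ : Set C) := by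
  have hinj : (Iio (minimalPeriod f x)).InjOn (f^[·] x) := iterate_injOn_Iio_minimalPeriod
  rintro (hfx | hx)
  · exact hi.ne' (hinj hip (hi.trans hip) hfx)
  · exact (zero_lt_one.trans hi).ne' (hinj hip ((zero_lt_one.trans hi).trans hip) hx)

theorem apply_iterate_iterate_of_ne (hf : Injective f)
    (hw : ∀ X Y, X ≠ Y → w (f X) (f Y) = w X Y) (k : ℕ) {X Y : C} (hXY : X ≠ Y) :
    w (f^[k] X) (f^[k] Y) = w X Y := by
  induction k with
  | zero => rfl
  | succ k ih =>
    rw [iterate_succ_apply', iterate_succ_apply', hw _ _ ((hf.iterate k).ne hXY), ih]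

variable [LinearOrder α]

theorem Ioc_apply_self_subset_biUnion_Ioc (hw : ∀ X Y, X ≠ Y → w (f X) (f Y) = w X Y)
    {B : C} (hB : B ∈ periodicPts f) (hfB : f B ≠ B) :
    Ioc (w (f B) B) (w B (f B)) ⊆ ⋃ X ∈ ({f B, B}ᶜ : Set C), Ioc (w X (f B)) (w X B) := by
  obtain ⟨N, hN⟩ : ∃ N, minimalPeriod f B = N + 2 := by
    have hpos : 0 < minimalPeriod f B := minimalPeriod_pos_of_mem_periodicPts hB
    have hne_one : minimalPeriod f B ≠ 1 := mt minimalPeriod_eq_one_iff_isFixedPt.mp hfB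
    exact Nat.exists_eq_add_of_le' (by lia)
  let a (i : ℕ) : α := w (f^[i + 2] B) (f B)
  have first_eq : a 0 = w (f B) B := hw (f B) B hfB
  have last_eq : a N = w B (f B) := by
    simp only [a, ← hN, iterate_minimalPeriod]
  rw [← first_eq, ← last_eq]
  refine (Ioc_subset_biUnion_Ioc N a).trans (iUnion₂_subset fun i hi ↦ ?_)
  have hX : f^[i + 2] B ∈ ({f B, B}ᶜ : Set C) :=
    iterate_mem_compl_pair (by lia) (by have := Finset.mem_range.mp hi; lia)
  have next_eq : a (i + 1) = w (f^[i + 2] B) B := by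
    simp only [a, iterate_succ_apply' f (i + 2)]
    exact hw _ _ fun h ↦ hX (Or.inr h)
  rw [next_eq]
  exact subset_biUnion_of_mem (u := fun X ↦ Ioc (w X (f B)) (w X B)) hX

theorem stmt_11_general (hf : Injective f) (hw : ∀ X Y, X ≠ Y → w (f X) (f Y) = w X Y)
    {A B : C} (hB : B ∈ periodicPts f) (hBA : ∃ k, f^[k] B = A) (hAB : A ≠ B) :
    Ioc (w A B) (w B A) ⊆ ⋃ X ∈ ({A, B}ᶜ : Set C), Ioc (w X A) (w X B) := by
  obtain ⟨k, rfl⟩ := hBA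
  obtain ⟨p, hp, hpB⟩ := hB
  exact Ioc_apply_self_subset_biUnion_Ioc
    (fun _ _ ↦ apply_iterate_iterate_of_ne hf hw k) ⟨p, hp, hpB.iterate k⟩ hAB

end

/-- The computation in Lemma 4.11: let `w` be a pairwise weight function on a finite set
of candidates (`w X Y ∈ [0,1]` and `w X Y + w Y X = 1` for distinct `X, Y`) whose
weighted tournament graph is cyclically symmetric, i.e. there is a permutation `τ` of
the candidates forming a single `n`-cycle (every candidate is reachable from every other
by iterating `τ`) with `w (τ X) (τ Y) = w X Y` for all distinct `X, Y`. Then for all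
distinct candidates `A, B`, the open interval `(w A B, w B A)` is contained in
`⋃_{C' ≠ A,B} [w C' A, w C' B]`. -/
theorem stmt_11 {C : Type*} [Fintype C]
    (w : C → C → ℝ)
    (hw01 : ∀ X Y : C, X ≠ Y → w X Y ∈ Set.Icc (0 : ℝ) 1)
    (hwsum : ∀ X Y : C, X ≠ Y → w X Y + w Y X = 1)
    (τ : Equiv.Perm C)
    (hcyc : ∀ X Y : C, ∃ k : ℕ, (τ ^ k) X = Y)
    (hsym : ∀ X Y : C, X ≠ Y → w (τ X) (τ Y) = w X Y)
    (A B : C) (hAB : A ≠ B) :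
    Set.Ioo (w A B) (w B A) ⊆
      ⋃ C' ∈ ({A, B}ᶜ : Set C), Set.Icc (w C' A) (w C' B) := by
  have hBA : ∃ k, τ^[k] B = A := by simpa only [Equiv.Perm.iterate_eq_pow] using hcyc B A
  exact Set.Ioo_subset_Ioc_self.trans <|
    (stmt_11_general τ.injective hsym (τ.injective.mem_periodicPts B) hBA hAB).trans <|
      Set.iUnion₂_mono fun _ _ ↦ Set.Ioc_subset_Icc_self
end

section
/- Suppose the weighted tournament graph induced by the voting profile is cyclically symmetric, i.e., there exists a permutation τ of the n candidates that is a single n-cycle such that w(τ(X),τ(Y)) = w(X,Y) for all distinct candidates X, Y, where w(X,Y) = |{v ∈ V : X ≻_v Y}|/m. Then for every pair of distinct candidates A, B, the bipartite graph G(A,B) has a perfect matching; equivalently, every candidate is in the matching uncovered set. -/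
/-!
By Hall's theorem it suffices that every set `S` of voters has at least `|S|` neighbours in
`G(A,B)`. Let `U` be the union of the sets `P_v(B)` over `v ∈ S`. If `A ∈ U`, every voter is a
neighbour of `S`. Otherwise let `σ` be a power of `τ` with `σ A = B`. The `σ`-orbit of `B ∈ U`
returns to `A ∉ U`, so it leaves `U`: there is `Y ∈ U` with `σ Y ∉ U`. All voters in `S` prefer
`B = σ A` to `σ Y`, every voter who prefers `A` to `Y` is a neighbour of `S`, and by symmetry there
are as many voters of the second kind as there are who prefer `σ A` to `σ Y`.
-/

theorem exists_perm_forall_rel_iff {α : Type*} [Finite α] (r : α → α → Prop) :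
    (∃ e : Equiv.Perm α, ∀ a, r a (e a)) ↔
      ∀ S : Set α, S.ncard ≤ {b | ∃ a ∈ S, r a b}.ncard := by
  classical
  have := Fintype.ofFinite α
  have perm_iff_injective :
      (∃ e : Equiv.Perm α, ∀ a, r a (e a)) ↔ ∃ f : α → α, f.Injective ∧ ∀ a, r a (f a) :=
    ⟨fun ⟨e, he⟩ ↦ ⟨e, e.injective, he⟩,
      fun ⟨f, hf, hr⟩ ↦ ⟨.ofBijective f (Finite.injective_iff_bijective.mp hf), hr⟩⟩
  rw [perm_iff_injective, ← Fintype.all_card_le_filter_rel_iff_exists_injective]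
  simp only [← Set.ncard_coe_finset, Finset.coe_filter_univ]
  exact ⟨fun h S ↦ by simpa using h S.toFinset, fun h S ↦ h S⟩

theorem exists_mem_apply_notMem_of_mem_periodicPts {α : Type*} {f : α → α} {s : Set α} {x : α}
    (hx : x ∈ Function.periodicPts f) (hfx : f x ∈ s) (hxs : x ∉ s) : ∃ y ∈ s, f y ∉ s := by
  by_contra! hmaps
  obtain ⟨n, hn, hper⟩ := hx
  have hreturn : f^[n - 1] (f x) = x := by
    rw [← Function.iterate_succ_apply, Nat.succ_eq_add_one, Nat.sub_add_cancel hn, hper]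
  exact hxs (hreturn ▸ Set.MapsTo.iterate hmaps (n - 1) hfx)

section Voting

variable {C V : Type*} {pref : V → C → C → Prop} {A B X Y Z : C} {S : Set V}

theorem wgt_le_wgt_iff [Fintype V] [Nonempty V] {X' Y' : C} :
    wgt pref X Y ≤ wgt pref X' Y' ↔ {v | pref v X Y}.ncard ≤ {v | pref v X' Y'}.ncard := by
  have hm : (0 : ℝ) < Fintype.card V := by exact_mod_cast Fintype.card_pos
  rw [wgt, wgt, div_le_div_iff_of_pos_right hm, Nat.cast_le]
  rfl

theorem wgt_iterate [Fintype V] {f : C → C} (hf : f.Injective)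
    (hsym : ∀ X Y, X ≠ Y → wgt pref (f X) (f Y) = wgt pref X Y) (hXY : X ≠ Y) (k : ℕ) :
    wgt pref (f^[k] X) (f^[k] Y) = wgt pref X Y := by
  induction k with
  | zero => rfl
  | succ k ih =>
    rw [Function.iterate_succ_apply', Function.iterate_succ_apply',
      hsym _ _ ((hf.iterate k).ne hXY), ih]

/-- The neighbourhood in `G(A,B)` of a set `S` of left vertices. -/
def gNeighbors (pref : V → C → C → Prop) (A B : C) (S : Set V) : Set V :=
  {v' | ∃ v ∈ S, GEdge pref A B v v'}

/-- The union of the sets `P_v(B)` over the voters `v ∈ S`: the candidates that some voter of `S`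
likes at least as much as `B`. -/
def weaklyPreferred (pref : V → C → C → Prop) (S : Set V) (B : C) : Set C :=
  {Z | ∃ v ∈ S, Z = B ∨ pref v Z B}

theorem self_mem_weaklyPreferred (hS : S.Nonempty) : B ∈ weaklyPreferred pref S B :=
  let ⟨v, hv⟩ := hS
  ⟨v, hv, .inl rfl⟩

theorem gNeighbors_eq_univ (hA : A ∈ weaklyPreferred pref S B) :
    gNeighbors pref A B S = Set.univ :=
  let ⟨v, hv, hAB⟩ := hA
  Set.eq_univ_of_forall fun _ ↦ ⟨v, hv, A, hAB, .inl rfl⟩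

theorem setOf_pref_subset_gNeighbors (hY : Y ∈ weaklyPreferred pref S B) :
    {v | pref v A Y} ⊆ gNeighbors pref A B S :=
  let ⟨v, hv, hYB⟩ := hY
  fun _ hAY ↦ ⟨v, hv, Y, hYB, .inr hAY⟩

theorem subset_setOf_pref_of_notMem_weaklyPreferred (hpref : ∀ v, Std.Trichotomous (pref v))
    (hZ : Z ∉ weaklyPreferred pref S B) : S ⊆ {v | pref v B Z} := by
  intro v hv
  by_contra hBZ
  have hZB : ¬ pref v Z B := fun h ↦ hZ ⟨v, hv, .inr h⟩
  exact hZ ⟨v, hv, .inl ((hpref v).trichotomous Z B hZB hBZ)⟩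

theorem hasPM_iff_ncard_le_ncard_gNeighbors [Finite V] :
    HasPM pref A B ↔ ∀ S : Set V, S.ncard ≤ (gNeighbors pref A B S).ncard :=
  exists_perm_forall_rel_iff (GEdge pref A B)

theorem stmt_12_general [Fintype V] [Nonempty V] (hpref : ∀ v, Std.Trichotomous (pref v))
    {σ : C → C} (hA : A ∈ Function.periodicPts σ)
    (hσ : ∀ Y, A ≠ Y → wgt pref (σ A) (σ Y) ≤ wgt pref A Y) :
    HasPM pref A (σ A) := by
  refine hasPM_iff_ncard_le_ncard_gNeighbors.mpr fun S ↦ ?_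
  obtain rfl | hS := S.eq_empty_or_nonempty
  · simp
  by_cases hAU : A ∈ weaklyPreferred pref S (σ A)
  · rw [gNeighbors_eq_univ hAU]
    exact Set.ncard_le_ncard S.subset_univ
  obtain ⟨Y, hYU, hσYU⟩ :=
    exists_mem_apply_notMem_of_mem_periodicPts hA (self_mem_weaklyPreferred hS) hAU
  have hAY : A ≠ Y := fun h ↦ hAU (h ▸ hYU)
  calc S.ncard
      ≤ {v | pref v (σ A) (σ Y)}.ncard :=
        Set.ncard_le_ncard (subset_setOf_pref_of_notMem_weaklyPreferred hpref hσYU)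
    _ ≤ {v | pref v A Y}.ncard := wgt_le_wgt_iff.mp (hσ Y hAY)
    _ ≤ (gNeighbors pref A (σ A) S).ncard :=
        Set.ncard_le_ncard (setOf_pref_subset_gNeighbors hYU)

end Voting

/-- Lemma 4.11: if the weighted tournament graph induced by the voting profile is
cyclically symmetric — there is a permutation `τ` of the candidates forming a single
cycle on all of them (every candidate reachable from every other by iterating `τ`) with
`w (τ X) (τ Y) = w X Y` for all distinct `X, Y` — then for every pair of distinct
candidates `A, B` the bipartite graph `G(A,B)` has a perfect matching, i.e. every
candidate lies in the matching uncovered set. -/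
theorem stmt_12 {C V : Type*} [Fintype C] [Fintype V] [Nonempty V]
    (pref : V → C → C → Prop) (hpref : ∀ v, IsStrictTotalOrder C (pref v))
    (τ : Equiv.Perm C)
    (hcyc : ∀ X Y : C, ∃ k : ℕ, (τ ^ k) X = Y)
    (hsym : ∀ X Y : C, X ≠ Y → wgt pref (τ X) (τ Y) = wgt pref X Y)
    (A B : C) (hAB : A ≠ B) :
    HasPM pref A B := by
  obtain ⟨k, rfl⟩ := hcyc A B
  exact stmt_12_general (fun v ↦ (hpref v).toTrichotomous)
    ((τ.injective.iterate k).mem_periodicPts A)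
    fun _ hAY ↦ (wgt_iterate τ.injective hsym hAY k).le
end

section
/- For every voting profile, there exists a candidate A such that for every metric d consistent with the profile and every candidate B, Σ_{v ∈ V} d(A,v) ≤ (2 + √5) · Σ_{v ∈ V} d(B,v). (Hence there is a deterministic social choice rule with distortion at most 2 + √5 ≈ 4.236.) -/
/-!
Plurality veto: starting from one ballot per voter, cast for that voter's favourite candidate, let
the voters one after the other strike out the remaining ballot whose candidate they like least. Let
`A` be the candidate on the ballot struck out last. Every voter `v'` likes `A` at least as much as
the candidate `Z` on the ballot they strike out, and the voter `v` who cast that ballot likes `Z` at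
least as much as any `B`; matching each `v` with the corresponding `v'` is therefore a perfect
matching of `G(A, B)` for all `B` at once. Along an edge of `G(A, B)`, consistency and the triangle
inequality through `v` and `B` give `d(A, v') ≤ d(B, v') + 2 d(B, v)`, and summing over the matching
bounds the cost of `A` by three times the cost of `B`.
-/

section Distortion

variable {C V : Type*} {pref : V → C → C → Prop} {d : C ⊕ V → C ⊕ V → ℝ} {A B : C}

theorem Consistent.dist_le_of_eq_or_pref (hc : Consistent pref d) {v : V} {X Y : C}
    (h : X = Y ∨ pref v X Y) : d (Sum.inl X) (Sum.inr v) ≤ d (Sum.inl Y) (Sum.inr v) := by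
  rcases h with rfl | h
  · exact le_rfl
  · exact hc v X Y h

theorem GEdge.dist_le {v v' : V} (hedge : GEdge pref A B v v') (hd : IsMetric d)
    (hc : Consistent pref d) :
    d (Sum.inl A) (Sum.inr v') ≤ d (Sum.inl B) (Sum.inr v') + 2 * d (Sum.inl B) (Sum.inr v) := by
  obtain ⟨Z, hZB, hAZ⟩ := hedge
  obtain ⟨-, symm, triangle⟩ := hd
  calc d (Sum.inl A) (Sum.inr v')
      ≤ d (Sum.inl Z) (Sum.inr v') := hc.dist_le_of_eq_or_pref (hAZ.imp_left Eq.symm)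
    _ ≤ d (Sum.inl Z) (Sum.inr v) + d (Sum.inr v) (Sum.inr v') := triangle _ _ _
    _ ≤ d (Sum.inl B) (Sum.inr v) + (d (Sum.inr v) (Sum.inl B) + d (Sum.inl B) (Sum.inr v')) :=
        add_le_add (hc.dist_le_of_eq_or_pref hZB) (triangle _ _ _)
    _ = d (Sum.inl B) (Sum.inr v') + 2 * d (Sum.inl B) (Sum.inr v) := by
        rw [symm (Sum.inr v)]; ring

theorem HasPM.sum_dist_le [Fintype V] (hpm : HasPM pref A B) (hd : IsMetric d)
    (hc : Consistent pref d) :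
    ∑ v, d (Sum.inl A) (Sum.inr v) ≤ 3 * ∑ v, d (Sum.inl B) (Sum.inr v) := by
  obtain ⟨M, hM⟩ := hpm
  calc ∑ v, d (Sum.inl A) (Sum.inr v)
      = ∑ v, d (Sum.inl A) (Sum.inr (M v)) := (M.sum_comp _).symm
    _ ≤ ∑ v, (d (Sum.inl B) (Sum.inr (M v)) + 2 * d (Sum.inl B) (Sum.inr v)) :=
        Finset.sum_le_sum fun v _ => (hM v).dist_le hd hc
    _ = 3 * ∑ v, d (Sum.inl B) (Sum.inr v) := by
        rw [Finset.sum_add_distrib, ← Finset.mul_sum,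
          M.sum_comp fun v => d (Sum.inl B) (Sum.inr v)]
        ring

end Distortion

section PluralityVeto

variable {C V : Type*} {pref : V → C → C → Prop}

/-- `X` is the favourite candidate of voter `v`: the candidate on the ballot that `v` contributes to
plurality veto. Equality is allowed so that `Y` ranges over all candidates. -/
def IsFavorite (pref : V → C → C → Prop) (v : V) (X : C) : Prop :=
  ∀ Y : C, X = Y ∨ pref v X Y

theorem exists_isFavorite [Finite C] [Nonempty C] (v : V) (hv : IsStrictTotalOrder C (pref v)) :
    ∃ X, IsFavorite pref v X := by
  classical
  let _ : LinearOrder C := linearOrderOfSTO (pref v)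
  obtain ⟨X, hX⟩ := Finite.exists_min (id : C → C)
  exact ⟨X, fun Y => (hX Y).eq_or_lt⟩

theorem exists_least_preferred {ι : Type*} (v : V) (hv : IsStrictTotalOrder C (pref v))
    (cand : ι → C) {W : Finset ι} (hW : W.Nonempty) :
    ∃ w ∈ W, ∀ i ∈ W, cand w = cand i ∨ pref v (cand i) (cand w) := by
  classical
  let _ : LinearOrder C := linearOrderOfSTO (pref v)
  obtain ⟨w, hwW, hw⟩ := W.exists_max_image cand hW
  exact ⟨w, hwW, fun i hi => (hw i hi).eq_or_lt.imp_left Eq.symm⟩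

/-- `veto` matches the ballots `W` with the voters `S` who strike them out, and every voter likes
the candidate on ballot `a` at least as much as the one they strike out. -/
def IsVetoMatching {ι : Type*} (pref : V → C → C → Prop) (cand : ι → C) (W : Finset ι)
    (S : Finset V) (a : ι) (veto : ι → V) : Prop :=
  Set.BijOn veto W S ∧ ∀ i ∈ W, cand i = cand a ∨ pref (veto i) (cand a) (cand i)

theorem IsVetoMatching.insert {ι : Type*} [DecidableEq ι] [DecidableEq V] {cand : ι → C}
    {W : Finset ι} {S : Finset V} {a w : ι} {v : V} {veto : ι → V}
    (h : IsVetoMatching pref cand W S a veto) (hw : w ∉ W) (hv : v ∉ S)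
    (hpref : cand w = cand a ∨ pref v (cand a) (cand w)) :
    IsVetoMatching pref cand (insert w W) (insert v S) a (Function.update veto w v) := by
  have update_of_mem : ∀ i ∈ W, Function.update veto w v i = veto i := fun i hi =>
    Function.update_of_ne (ne_of_mem_of_not_mem hi hw) _ _
  constructor
  · have hbij : Set.BijOn (Function.update veto w v) W S :=
      h.1.congr fun i hi => (update_of_mem i hi).symm
    simpa using hbij.insert (a := w) (by simpa using hv)
  · intro i hi
    rcases Finset.mem_insert.mp hi with rfl | hi
    · simpa using hpref
    · simpa only [update_of_mem i hi] using h.2 i hi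

-- The first voter of `S` strikes out their least preferred ballot `w`; whichever ballot survives
-- the remaining vetoes, this voter likes it at least as much as `w`.
theorem exists_isVetoMatching {ι : Type*} (hpref : ∀ v, IsStrictTotalOrder C (pref v))
    (cand : ι → C) {S : Finset V} (hS : S.Nonempty) {W : Finset ι} (hcard : W.card = S.card) :
    ∃ a ∈ W, ∃ veto, IsVetoMatching pref cand W S a veto := by
  classical
  induction hS using Finset.Nonempty.cons_induction generalizing W with
  | singleton v =>
    obtain ⟨w, rfl⟩ := Finset.card_eq_one.mp hcard
    exact ⟨w, by simp, fun _ => v, by simp [IsVetoMatching]⟩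
  | cons v S hv _ ih =>
    rw [Finset.card_cons] at hcard
    obtain ⟨w, hwW, hw⟩ :=
      exists_least_preferred v (hpref v) cand (Finset.card_pos.mp (by omega : 0 < W.card))
    obtain ⟨a, ha, veto, hveto⟩ :=
      ih (W := W.erase w) (by rw [Finset.card_erase_of_mem hwW]; omega)
    have haW : a ∈ W := Finset.mem_of_mem_erase ha
    refine ⟨a, haW, Function.update veto w v, ?_⟩
    simpa only [Finset.insert_erase hwW, Finset.cons_eq_insert] using
      hveto.insert (Finset.notMem_erase w W) hv (hw a haW)

theorem exists_forall_hasPM [Finite V] [Nonempty C] (hpref : ∀ v, IsStrictTotalOrder C (pref v))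
    (hfav : ∀ v, ∃ X, IsFavorite pref v X) : ∃ A, ∀ B, HasPM pref A B := by
  have := Fintype.ofFinite V
  rcases isEmpty_or_nonempty V with _ | _
  · exact ⟨Classical.arbitrary C, fun _ => ⟨Equiv.refl V, isEmptyElim⟩⟩
  choose top htop using hfav
  obtain ⟨a, -, veto, hbij, hveto⟩ :=
    exists_isVetoMatching hpref top (S := Finset.univ) Finset.univ_nonempty rfl
  have veto_bijective : Function.Bijective veto := by
    simpa only [Finset.coe_univ, Set.bijOn_univ] using hbij
  exact ⟨top a, fun B => ⟨Equiv.ofBijective veto veto_bijective, fun v =>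
    ⟨top v, htop v B, hveto v (Finset.mem_univ v)⟩⟩⟩

end PluralityVeto

theorem stmt_14_general {C V : Type*} [Nonempty C] [Fintype V]
    (pref : V → C → C → Prop) (hpref : ∀ v, IsStrictTotalOrder C (pref v))
    (hfav : ∀ v, ∃ X, IsFavorite pref v X) :
    ∃ A : C, ∀ d : C ⊕ V → C ⊕ V → ℝ, IsMetric d → Consistent pref d →
      ∀ B : C,
        ∑ v : V, d (Sum.inl A) (Sum.inr v) ≤ 3 * ∑ v : V, d (Sum.inl B) (Sum.inr v) := by
  obtain ⟨A, hA⟩ := exists_forall_hasPM hpref hfav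
  exact ⟨A, fun _ hd hc B => (hA B).sum_dist_le hd hc⟩

/-- The main upper-bound result (Section 3): for every voting profile there is a
candidate `A` whose social cost is within a factor `2 + √5 ≈ 4.236` of every candidate's
social cost, for every consistent metric; hence there is a deterministic social choice
rule with distortion at most `2 + √5`. -/
theorem stmt_14 {C V : Type*} [Fintype C] [Nonempty C] [Fintype V]
    (pref : V → C → C → Prop) (hpref : ∀ v, IsStrictTotalOrder C (pref v)) :
    ∃ A : C, ∀ d : C ⊕ V → C ⊕ V → ℝ, IsMetric d → Consistent pref d →
      ∀ B : C,
        ∑ v : V, d (Sum.inl A) (Sum.inr v) ≤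
          (2 + Real.sqrt 5) * ∑ v : V, d (Sum.inl B) (Sum.inr v) := by
  obtain ⟨A, hA⟩ := stmt_14_general pref hpref fun v => exists_isFavorite v (hpref v)
  have three_le : (3 : ℝ) ≤ 2 + √5 := by linarith [Real.one_le_sqrt.mpr (by norm_num : (1 : ℝ) ≤ 5)]
  exact ⟨A, fun d hd hc B => (hA d hd hc B).trans
    (mul_le_mul_of_nonneg_right three_le (Finset.sum_nonneg fun _ _ => hd.1 _ _))⟩
end

section
/- There exists a voting profile with 4 candidates A, B, C, D and 100 voters (explicitly: 35 voters with B ≻ A ≻ D ≻ C, 10 with C ≻ B ≻ A ≻ D, 15 with D ≻ C ≻ B ≻ A, 10 with C ≻ D ≻ B ≻ A, 15 with A ≻ D ≻ C ≻ B, 10 with C ≻ A ≻ D ≻ B, 5 with C ≻ D ≻ A ≻ B) such that for every consecutive pair (X,Y) in the cycle (A,B), (B,C), (C,D), (D,A), the set (w(X,Y), w(Y,X)) \ ⋃_{Z ∈ C \ {X,Y}} [w(Z,X), w(Z,Y)] is nonempty, while nevertheless the bipartite graphs G(C,D) and G(D,A) have perfect matchings. -/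
/-- The explicit voting profile of Example 4.12, given by the rank each of the 100
voters assigns to the candidates `A = 0`, `B = 1`, `C = 2`, `D = 3` (rank `0` is the
most preferred):
voters `0–34` have `B ≻ A ≻ D ≻ C`, voters `35–44` have `C ≻ B ≻ A ≻ D`,
voters `45–59` have `D ≻ C ≻ B ≻ A`, voters `60–69` have `C ≻ D ≻ B ≻ A`,
voters `70–84` have `A ≻ D ≻ C ≻ B`, voters `85–94` have `C ≻ A ≻ D ≻ B`,
voters `95–99` have `C ≻ D ≻ A ≻ B`. -/
def rank100 (v : Fin 100) : Fin 4 → ℕ :=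
  if v.val < 35 then ![1, 0, 3, 2]        -- B ≻ A ≻ D ≻ C
  else if v.val < 45 then ![2, 1, 0, 3]   -- C ≻ B ≻ A ≻ D
  else if v.val < 60 then ![3, 2, 1, 0]   -- D ≻ C ≻ B ≻ A
  else if v.val < 70 then ![3, 2, 0, 1]   -- C ≻ D ≻ B ≻ A
  else if v.val < 85 then ![0, 3, 2, 1]   -- A ≻ D ≻ C ≻ B
  else if v.val < 95 then ![1, 3, 0, 2]   -- C ≻ A ≻ D ≻ B
  else ![2, 3, 0, 1]                      -- C ≻ D ≻ A ≻ B

/-- Voter `v` prefers candidate `X` to `Y` iff `X` has a smaller rank. -/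
def prefEx (v : Fin 100) (X Y : Fin 4) : Prop := rank100 v X < rank100 v Y

/-!
The hundred voters cast only seven distinct ballots, so both halves of the example can be read off
the ballots and their multiplicities. The weights are sums of multiplicities, and after clearing the
denominator the four gaps contain the integers `67`, `52`, `47` and `32`. A perfect matching of
`G(A,B)` amounts to an integer transport plan between ballots whose two marginals are the
multiplicities and which is supported on pairs of ballots joined by an edge.
-/

open Finset

section Gap

variable {C α β : Type*} [LinearOrder α] [Preorder β]

/-- The set `(w(X,Y), w(Y,X)) \ ⋃_{Z ≠ X,Y} [w(Z,X), w(Z,Y)]` attached to a weighted tournament `w`.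
The weights may lie in any preorder, so that it can be computed from integer vote counts as well as
from vote fractions. -/
def tournamentGap (w : C → C → β) (X Y : C) : Set β :=
  Set.Ioo (w X Y) (w Y X) \ ⋃ Z ∈ ({X, Y}ᶜ : Set C), Set.Icc (w Z X) (w Z Y)

lemma mem_tournamentGap_iff {w : C → C → β} {X Y : C} {b : β} :
    b ∈ tournamentGap w X Y ↔
      (w X Y < b ∧ b < w Y X) ∧ ∀ Z, Z ≠ X → Z ≠ Y → w Z X ≤ b → ¬ b ≤ w Z Y := by
  simp only [tournamentGap, Set.mem_sdiff, Set.mem_Ioo, Set.mem_iUnion, Set.mem_Icc,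
    Set.mem_compl_iff, Set.mem_insert_iff, Set.mem_singleton_iff, not_exists, not_or, not_and,
    and_imp, ne_eq]

lemma mem_tournamentGap_comp_iff {f : α → β} (hf : StrictMono f) {w : C → C → α} {X Y : C}
    {a : α} :
    f a ∈ tournamentGap (fun X Y => f (w X Y)) X Y ↔ a ∈ tournamentGap w X Y := by
  simp only [mem_tournamentGap_iff, hf.lt_iff_lt, hf.le_iff_le]

end Gap

section TransportPlan

variable {V W S T : Type*} [Fintype V] [Fintype W] [Fintype S] [Fintype T]
  [DecidableEq S] [DecidableEq T]

lemma exists_equiv_of_transportPlan {f : V → S} {g : W → T} (n : S → T → ℕ)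
    (row_sum : ∀ i, ∑ j, n i j = #{v | f v = i}) (col_sum : ∀ j, ∑ i, n i j = #{w | g w = j}) :
    ∃ e : V ≃ W, ∀ v, n (f v) (g (e v)) ≠ 0 := by
  have splitRow (i : S) : Nonempty ({v // f v = i} ≃ Σ j, Fin (n i j)) :=
    ⟨Fintype.equivOfCardEq (by simp [Fintype.card_subtype, row_sum])⟩
  have splitCol (j : T) : Nonempty ({w // g w = j} ≃ Σ i, Fin (n i j)) :=
    ⟨Fintype.equivOfCardEq (by simp [Fintype.card_subtype, col_sum])⟩
  let toRows : V ≃ Σ i, Σ j, Fin (n i j) :=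
    (Equiv.sigmaFiberEquiv f).symm.trans (Equiv.sigmaCongrRight fun i => (splitRow i).some)
  let toCols : W ≃ Σ j, Σ i, Fin (n i j) :=
    (Equiv.sigmaFiberEquiv g).symm.trans (Equiv.sigmaCongrRight fun j => (splitCol j).some)
  let swap : (Σ i, Σ j, Fin (n i j)) ≃ Σ j, Σ i, Fin (n i j) :=
    ⟨fun x => ⟨x.2.1, x.1, x.2.2⟩, fun x => ⟨x.2.1, x.1, x.2.2⟩, fun _ => rfl, fun _ => rfl⟩
  let e : V ≃ W := (toRows.trans swap).trans toCols.symm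
  refine ⟨e, fun v => ?_⟩
  have g_e : g (e v) = (toRows v).2.1 :=
    congrArg Sigma.fst (toCols.apply_symm_apply (swap (toRows v)))
  rw [g_e]
  exact (toRows v).2.2.pos.ne'

end TransportPlan

section GroupedProfile

variable {C V T : Type*} [Fintype V] [Fintype T] [DecidableEq T]

lemma wgt_comp (pref : T → C → C → Prop) [∀ i, DecidableRel (pref i)] (ballot : V → T)
    (X Y : C) :
    wgt (fun v => pref (ballot v)) X Y =
      ((∑ i with pref i X Y, #{v | ballot v = i} : ℕ) : ℝ) / Fintype.card V := by
  have card_eq_sum : #{v | pref (ballot v) X Y} = ∑ i with pref i X Y, #{v | ballot v = i} := by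
    rw [card_eq_sum_card_fiberwise (f := ballot) (t := {i | pref i X Y}) (by simp [Set.MapsTo])]
    refine sum_congr rfl fun i hi => congrArg card ?_
    grind
  rw [wgt, Nat.card_eq_fintype_card, Fintype.card_subtype, card_eq_sum]

lemma hasPM_comp_of_transportPlan {pref : T → C → C → Prop} {ballot : V → T} {A B : C}
    (n : T → T → ℕ) (row_sum : ∀ i, ∑ j, n i j = #{v | ballot v = i})
    (col_sum : ∀ j, ∑ i, n i j = #{v | ballot v = j})
    (edge : ∀ i j, n i j ≠ 0 → GEdge pref A B i j) :
    HasPM (fun v => pref (ballot v)) A B := by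
  obtain ⟨M, hM⟩ := exists_equiv_of_transportPlan n row_sum col_sum
  exact ⟨M, fun v => edge _ _ (hM v)⟩

end GroupedProfile

instance decidableGEdge {C V : Type*} [Fintype C] [DecidableEq C] (pref : V → C → C → Prop)
    [∀ v, DecidableRel (pref v)] (A B : C) (v v' : V) : Decidable (GEdge pref A B v v') :=
  inferInstanceAs (Decidable (∃ Z, (Z = B ∨ pref v Z B) ∧ (Z = A ∨ pref v' A Z)))

section Ballots

/-- The seven ballots of the example, each given like `rank100` by the ranks of `A`, `B`, `C`, `D`
and listed in the order in which they occur in the profile. -/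
def ballotRank : Fin 7 → Fin 4 → ℕ :=
  ![![1, 0, 3, 2], ![2, 1, 0, 3], ![3, 2, 1, 0], ![3, 2, 0, 1], ![0, 3, 2, 1], ![1, 3, 0, 2],
    ![2, 3, 0, 1]]

/-- The preference of a voter casting the `i`-th ballot. -/
def ballotPref (i : Fin 7) (X Y : Fin 4) : Prop := ballotRank i X < ballotRank i Y

instance decidableRelBallotPref (i : Fin 7) : DecidableRel (ballotPref i) := fun X Y =>
  inferInstanceAs (Decidable (ballotRank i X < ballotRank i Y))

/-- The ballot cast by each voter of the example, as an index into `ballotRank`. -/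
def ballot (v : Fin 100) : Fin 7 :=
  if v.val < 35 then 0
  else if v.val < 45 then 1
  else if v.val < 60 then 2
  else if v.val < 70 then 3
  else if v.val < 85 then 4
  else if v.val < 95 then 5
  else 6

/-- The number of voters casting each ballot. -/
def ballotCount : Fin 7 → ℕ := ![35, 10, 15, 10, 15, 10, 5]

/-- The vote counts of the example: entry `(X, Y)` is the number of voters preferring `X` to `Y`,
that is `100 * w(X,Y)`. -/
def tally : Fin 4 → Fin 4 → ℕ :=
  ![![ 0, 30, 50, 70],
    ![70,  0, 35, 45],
    ![50, 65,  0, 35],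
    ![30, 55, 65,  0]]

lemma prefEx_eq_ballotPref : prefEx = fun v => ballotPref (ballot v) := by
  funext v X Y
  unfold prefEx rank100 ballotPref ballot
  split_ifs <;> rfl

lemma card_ballot_eq (i : Fin 7) : #{v | ballot v = i} = ballotCount i := by
  decide +kernel +revert

lemma ballotRank_injective (i : Fin 7) : Function.Injective (ballotRank i) := by
  decide +revert

lemma sum_ballotCount_eq_tally (X Y : Fin 4) :
    ∑ i with ballotPref i X Y, ballotCount i = tally X Y := by
  decide +revert

lemma wgt_prefEx (X Y : Fin 4) : wgt prefEx X Y = (tally X Y : ℝ) / 100 := by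
  simp only [prefEx_eq_ballotPref, wgt_comp, card_ballot_eq, sum_ballotCount_eq_tally,
    Fintype.card_fin, Nat.cast_ofNat]

lemma isStrictTotalOrder_prefEx (v : Fin 100) : IsStrictTotalOrder (Fin 4) (prefEx v) := by
  rw [prefEx_eq_ballotPref]
  exact (RelEmbedding.preimage ⟨_, ballotRank_injective (ballot v)⟩ (· < ·)).isStrictTotalOrder

lemma tournamentGap_prefEx_nonempty_of_mem {X Y : Fin 4} {k : ℕ}
    (hk : k ∈ tournamentGap tally X Y) :
    (tournamentGap (wgt prefEx) X Y).Nonempty := by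
  have strictMono_div : StrictMono fun m : ℕ => (m : ℝ) / 100 := fun a b hab => by
    dsimp only
    gcongr
  have wgt_eq : wgt prefEx = fun X Y => (tally X Y : ℝ) / 100 := funext₂ wgt_prefEx
  rw [wgt_eq]
  exact ⟨_, (mem_tournamentGap_comp_iff strictMono_div).mpr hk⟩

lemma hasPM_prefEx_of_transportPlan {A B : Fin 4} (n : Fin 7 → Fin 7 → ℕ)
    (row_sum : ∀ i, ∑ j, n i j = ballotCount i) (col_sum : ∀ j, ∑ i, n i j = ballotCount j)
    (edge : ∀ i j, n i j ≠ 0 → GEdge ballotPref A B i j) : HasPM prefEx A B := by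
  simp only [← card_ballot_eq] at row_sum col_sum
  rw [prefEx_eq_ballotPref]
  exact hasPM_comp_of_transportPlan n row_sum col_sum edge

-- No voter preferring `D` to `C` is adjacent to a voter of the first ballot, so the other 35 voters
-- have to fill the first column.
lemma hasPM_prefEx_two_three : HasPM prefEx 2 3 :=
  hasPM_prefEx_of_transportPlan
    ![![ 0, 10,  0, 10, 15,  0,  0],
      ![10,  0,  0,  0,  0,  0,  0],
      ![ 0,  0,  0,  0,  0, 10,  5],
      ![10,  0,  0,  0,  0,  0,  0],
      ![ 0,  0, 15,  0,  0,  0,  0],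
      ![10,  0,  0,  0,  0,  0,  0],
      ![ 5,  0,  0,  0,  0,  0,  0]]
    (by decide) (by decide) (by decide)

-- The ballot `C ≻ B ≻ A ≻ D` is adjacent only to left voters preferring `D` to `A`, and from
-- `A ≻ D ≻ C ≻ B` only right voters preferring `D` to `A` can be reached.
lemma hasPM_prefEx_three_zero : HasPM prefEx 3 0 :=
  hasPM_prefEx_of_transportPlan
    ![![ 0,  0,  0, 10, 15, 10,  0],
      ![10,  0,  0,  0,  0,  0,  0],
      ![15,  0,  0,  0,  0,  0,  0],
      ![ 0, 10,  0,  0,  0,  0,  0],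
      ![ 0,  0, 15,  0,  0,  0,  0],
      ![10,  0,  0,  0,  0,  0,  0],
      ![ 0,  0,  0,  0,  0,  0,  5]]
    (by decide) (by decide) (by decide)

end Ballots

/-- Example 4.12: for the explicit profile above (4 candidates `A = 0`, `B = 1`,
`C = 2`, `D = 3` and 100 voters), each voter's preference is a strict total order; for
every consecutive pair `(X,Y)` in the cycle `(A,B), (B,C), (C,D), (D,A)` the set
`(w(X,Y), w(Y,X)) \ ⋃_{Z ≠ X,Y} [w(Z,X), w(Z,Y)]` is nonempty; and nevertheless the
bipartite graphs `G(C,D)` and `G(D,A)` have perfect matchings. -/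
theorem stmt_15 :
    (∀ v, IsStrictTotalOrder (Fin 4) (prefEx v)) ∧
    (∀ p ∈ [((0 : Fin 4), (1 : Fin 4)), (1, 2), (2, 3), (3, 0)],
      (Set.Ioo (wgt prefEx p.1 p.2) (wgt prefEx p.2 p.1) \
        ⋃ Z ∈ ({p.1, p.2}ᶜ : Set (Fin 4)),
          Set.Icc (wgt prefEx Z p.1) (wgt prefEx Z p.2)).Nonempty) ∧
    HasPM prefEx 2 3 ∧ HasPM prefEx 3 0 := by
  refine ⟨isStrictTotalOrder_prefEx, ?_, hasPM_prefEx_two_three, hasPM_prefEx_three_zero⟩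
  suffices ∀ p ∈ [((0 : Fin 4), (1 : Fin 4)), (1, 2), (2, 3), (3, 0)],
      (tournamentGap (wgt prefEx) p.1 p.2).Nonempty from this
  simp only [List.forall_mem_cons]
  exact ⟨tournamentGap_prefEx_nonempty_of_mem (k := 67) (mem_tournamentGap_iff.mpr (by decide)),
    tournamentGap_prefEx_nonempty_of_mem (k := 52) (mem_tournamentGap_iff.mpr (by decide)),
    tournamentGap_prefEx_nonempty_of_mem (k := 47) (mem_tournamentGap_iff.mpr (by decide)),
    tournamentGap_prefEx_nonempty_of_mem (k := 32) (mem_tournamentGap_iff.mpr (by decide)),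
    List.forall_mem_nil _⟩
end
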